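/- Let R be a local unique factorization domain and A an m×m matrix over R whose determinant is not a zero divisor. Then ann(coker A) is a principal ideal. -/

import Mathlib

/-- The annihilator of the cokernel of (the linear map defined by) a matrix. -/
def Matrix.annCoker {R : Type*} [CommRing R] {m n : Type*} [Fintype n] [Fintype m]
    (A : Matrix m n R) : Ideal R :=
  Module.annihilator R ((m → R) ⧸ LinearMap.range A.mulVecLin)

theorem mem_annCoker_iff {R : Type*} [CommRing R] {m : ℕ} (A : Matrix (Fin m) (Fin m) R) (r : R) :
    r ∈ A.annCoker ↔ ∃ B : Matrix (Fin m) (Fin m) R, A * B = r • (1 : Matrix (Fin m) (Fin m) R) := by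
  have h0 : r ∈ A.annCoker ↔ ∀ v : Fin m → R, ∃ w, A.mulVec w = r • v := by
    unfold Matrix.annCoker
    rw [Module.mem_annihilator, (Submodule.mkQ_surjective _).forall]
    simp only [Submodule.mkQ_apply, ← Submodule.Quotient.mk_smul, Submodule.Quotient.mk_eq_zero,
      LinearMap.mem_range, Matrix.mulVecLin_apply]
  rw [h0]
  constructor
  · intro h
    choose w hw using h
    refine ⟨Matrix.of fun i j => w (Pi.single j 1) i, ?_⟩
    ext i j
    have := congrFun (hw (Pi.single j 1)) i
    simp only [Matrix.mulVec, dotProduct, Pi.smul_apply, smul_eq_mul] at this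
    simp only [Matrix.mul_apply, Matrix.of_apply, Matrix.smul_apply, smul_eq_mul, this,
      Matrix.one_apply, Pi.single_apply]
  · rintro ⟨B, hB⟩ v
    refine ⟨B.mulVec v, ?_⟩
    rw [Matrix.mulVec_mulVec, hB, Matrix.smul_mulVec, Matrix.one_mulVec]

theorem stmt8 {R : Type*} [CommRing R] [IsLocalRing R] [IsDomain R]
    [UniqueFactorizationMonoid R] {m : ℕ} (A : Matrix (Fin m) (Fin m) R)
    (hdet : A.det ∈ nonZeroDivisors R) :
    A.annCoker.IsPrincipal := by
  classical
  let : StrongNormalizationMonoid R := UniqueFactorizationMonoid.strongNormalizationMonoid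
  let : NormalizedGCDMonoid R := UniqueFactorizationMonoid.toNormalizedGCDMonoid R
  have hd : A.det ≠ 0 := nonZeroDivisors.ne_zero hdet
  have key : ∀ r : R, r ∈ A.annCoker ↔ ∀ p : Fin m × Fin m, A.det ∣ r * A.adjugate p.1 p.2 := by
    intro r
    rw [mem_annCoker_iff]
    constructor
    · rintro ⟨B, hB⟩ p
      have h : r • A.adjugate = A.det • B := by
        have h2 := congrArg (fun M => A.adjugate * M) hB
        simp only [← Matrix.mul_assoc, Matrix.adjugate_mul, Matrix.smul_mul, Matrix.one_mul,
          Matrix.mul_smul, Matrix.mul_one] at h2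
        exact h2.symm
      exact ⟨B p.1 p.2, by simpa using congrFun (congrFun h p.1) p.2⟩
    · intro h
      choose b hb using h
      refine ⟨Matrix.of fun i j => b (i, j), ?_⟩
      have h : r • A.adjugate = A.det • (Matrix.of fun i j => b (i, j)) := by
        ext i j
        simpa using hb (i, j)
      have h2 := congrArg (fun M => A * M) h
      simp only [Matrix.mul_smul, Matrix.mul_adjugate] at h2
      rw [smul_comm] at h2
      exact (smul_right_injective _ hd h2).symm
  obtain ⟨c, hc⟩ := gcd_dvd_left A.det
    (Finset.univ.gcd fun p : Fin m × Fin m => A.adjugate p.1 p.2)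
  set g := gcd A.det (Finset.univ.gcd fun p : Fin m × Fin m => A.adjugate p.1 p.2) with hg
  have hg0 : g ≠ 0 := by
    intro h0
    rw [h0, zero_mul] at hc
    exact hd hc
  refine ⟨⟨c, ?_⟩⟩
  ext r
  rw [key, Ideal.submodule_span_eq, Ideal.mem_span_singleton]
  constructor
  · intro h
    have h1 : A.det ∣ r * Finset.univ.gcd fun p : Fin m × Fin m => A.adjugate p.1 p.2 :=
      (Finset.dvd_gcd fun p _ => h p).trans (Finset.gcd_mul_left' _ _ r).dvd
    have h2 : A.det ∣ r * g :=
      (dvd_gcd (dvd_mul_left _ _) h1).trans (gcd_mul_left' r _ _).dvd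
    rw [hc, mul_comm r g] at h2
    exact (mul_dvd_mul_iff_left hg0).1 h2
  · intro h p
    rw [hc, mul_comm r]
    exact mul_dvd_mul ((gcd_dvd_right _ _).trans (Finset.gcd_dvd (Finset.mem_univ p))) h
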